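/- arXiv:2011.07241 — 9 statements merged into one kernel-verified Lean document; each statement's English description precedes it below -/
import Mathlib

section
/- Let N ≥ 1 and let (b,d) ∈ ℤ² be primitive (gcd(b,d) = 1) with N ∤ d. Then there exist k ∈ ℕ and a sequence v₀, …, v_k in ℤ² with v₀ = (0,1), v_k = (b,d), such that b_{i-1}·d_i − b_i·d_{i-1} = 1 for all 1 ≤ i ≤ k (writing v_i = (b_i,d_i)), and moreover N does not divide d_i for any 0 ≤ i ≤ k. -/
/-- One step of an `N`-connecting sequence: determinant one, with target of second coordinate
not divisible by `N`. -/
def ConnectingStep (N : ℕ) (u v : ℤ × ℤ) : Prop :=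
  u.1 * v.2 - v.1 * u.2 = 1 ∧ ¬ (N : ℤ) ∣ v.2

namespace ConnectingStep

open Relation

variable {N : ℕ}

/-- A chain of connecting steps starting at `u` can be written as a sequence. -/
theorem exists_sequence {u w : ℤ × ℤ} (hu : ¬ (N : ℤ) ∣ u.2)
    (h : ReflTransGen (ConnectingStep N) u w) :
    ∃ (k : ℕ) (v : ℕ → ℤ × ℤ), v 0 = u ∧ v k = w ∧
      (∀ i : ℕ, 1 ≤ i → i ≤ k →
        (v (i - 1)).1 * (v i).2 - (v i).1 * (v (i - 1)).2 = 1) ∧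
      (∀ i : ℕ, i ≤ k → ¬ (N : ℤ) ∣ (v i).2) := by
  induction h with
  | refl => exact ⟨0, fun _ => u, rfl, rfl, fun i _ _ => by omega, fun _ _ => hu⟩
  | @tail x y _ hxy ih =>
    obtain ⟨k, v, h0, hk, hdet, hdvd⟩ := ih
    refine ⟨k + 1, fun i => if i ≤ k then v i else y, by simp [h0], by simp, ?_, ?_⟩
    · intro i hi hik
      rcases Nat.lt_or_ge k i with hlt | hle
      · obtain rfl : i = k + 1 := by omega
        simpa [hk] using hxy.1
      · have hle' : i - 1 ≤ k := by omega
        simpa only [hle, hle', if_true] using hdet i hi hle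
    · intro i _
      by_cases hle : i ≤ k
      · simpa only [hle, if_true] using hdvd i hle
      · simpa only [hle, if_false] using hxy.2

theorem reachable_one (hN : ¬ (N : ℤ) ∣ 1) (b : ℤ) :
    ReflTransGen (ConnectingStep N) (0, 1) (b, 1) := by
  have down : ∀ c : ℤ, ConnectingStep N (c, 1) (c - 1, 1) :=
    fun c => ⟨by ring, hN⟩
  have up : ∀ c : ℤ, ReflTransGen (ConnectingStep N) (c, 1) (c + 1, 1) := fun c => by
    have h₁ : ConnectingStep N (c, 1) (-1 - c, -1) := ⟨by ring, by simpa using hN⟩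
    have h₂ : ConnectingStep N (-1 - c, -1) (c + 2, 1) := ⟨by ring, hN⟩
    have h₃ := down (c + 2)
    rw [show c + 2 - 1 = c + 1 by ring] at h₃
    exact ((ReflTransGen.single h₁).tail h₂).tail h₃
  induction b using Int.induction_on with
  | zero => exact .refl
  | succ n ih => exact ih.trans (up _)
  | pred n ih => exact ih.tail (down _)

/-- A primitive vector with second coordinate of absolute value at least two has a predecessor
with smaller second coordinate, again not divisible by `N`. -/
theorem exists_predecessor {b d : ℤ} (h : IsCoprime b d) (hd : ¬ (N : ℤ) ∣ d)
    (hd1 : 1 < d.natAbs) :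
    ∃ a c : ℤ, a * d - b * c = 1 ∧ c.natAbs < d.natAbs ∧ ¬ (N : ℤ) ∣ c := by
  obtain ⟨x, y, hxy⟩ := h
  have hd0 : d ≠ 0 := by rintro rfl; simp at hd1
  obtain ⟨a, c, hac, hc0, hcd⟩ : ∃ a c : ℤ, a * d - b * c = 1 ∧ 0 ≤ c ∧ c < |d| := by
    refine ⟨y - b * (-x / d), -x % d, ?_, Int.emod_nonneg _ hd0, Int.emod_lt_abs _ hd0⟩
    linear_combination hxy - b * Int.emod_add_mul_ediv (-x) d
  have habs : |d| = d.natAbs := Int.abs_eq_natAbs d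
  have hc : c ≠ 0 := by
    rintro rfl
    have : IsUnit d := IsUnit.of_mul_eq_one a (by linarith)
    have := Int.isUnit_iff_natAbs_eq.1 this
    omega
  by_cases hNc : (N : ℤ) ∣ c
  · refine ⟨a - b * d.sign, c - |d|, ?_, ?_, ?_⟩
    · linear_combination hac - b * Int.sign_mul_self_eq_abs d
    · omega
    · intro hdiff
      exact hd ((dvd_abs _ _).1 ((dvd_sub_right hNc).1 hdiff))
  · exact ⟨a, c, hac, by omega, hNc⟩

theorem reachable (b d : ℤ) (h : IsCoprime b d) (hd : ¬ (N : ℤ) ∣ d) :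
    ReflTransGen (ConnectingStep N) (0, 1) (b, d) := by
  induction hn : d.natAbs using Nat.strong_induction_on generalizing b d with
  | _ n ih =>
    subst hn
    have hN : ¬ (N : ℤ) ∣ 1 := fun h1 => hd (h1.trans (one_dvd d))
    rcases lt_or_ge 1 d.natAbs with hlt | hle
    · obtain ⟨a, c, hac, hcd, hc⟩ := exists_predecessor h hd hlt
      have hcop : IsCoprime a c := ⟨d, -b, by linear_combination hac⟩
      exact (ih _ hcd a c hcop hc rfl).tail ⟨hac, hd⟩
    · have hd0 : d ≠ 0 := by rintro rfl; exact hd (dvd_zero _)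
      obtain rfl | rfl : d = 1 ∨ d = -1 := by omega
      · exact reachable_one hN b
      · exact (reachable_one hN (-1 - b)).tail ⟨by ring, hd⟩

end ConnectingStep

/-- Let `N ≥ 1` and let `(b, d) ∈ ℤ²` be primitive (`gcd(b, d) = 1`) with
`N ∤ d`. Then there is an `N`-connecting sequence from `(0, 1)` to `(b, d)`: a finite
sequence `v 0, …, v k` in `ℤ²` with `v 0 = (0, 1)`, `v k = (b, d)`, with
`(v (i-1)).1 * (v i).2 - (v i).1 * (v (i-1)).2 = 1` for all `1 ≤ i ≤ k`, and such that `N`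
does not divide the second coordinate of any `v i` for `0 ≤ i ≤ k`. -/
theorem N_connecting_sequence_exists (N : ℕ) (hN : 1 ≤ N) (b d : ℤ)
    (h : Int.gcd b d = 1) (hd : ¬ (N : ℤ) ∣ d) :
    ∃ (k : ℕ) (v : ℕ → ℤ × ℤ),
      v 0 = (0, 1) ∧ v k = (b, d) ∧
      (∀ i : ℕ, 1 ≤ i → i ≤ k →
        (v (i - 1)).1 * (v i).2 - (v i).1 * (v (i - 1)).2 = 1) ∧
      (∀ i : ℕ, i ≤ k → ¬ (N : ℤ) ∣ (v i).2) := by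
  have h1 : ¬ (N : ℤ) ∣ 1 := fun h1 => hd (h1.trans (one_dvd d))
  exact ConnectingStep.exists_sequence h1
    (ConnectingStep.reachable b d (Int.isCoprime_iff_gcd_eq_one.2 h) hd)
end

section
/- Let γ ∈ SL₂(ℤ) satisfy |trace γ| > 2, and let w ∈ ℤ² be a nonzero row vector. Then the norms ‖w·γⁿ‖ tend to infinity as n → ∞; in particular the vectors w·γⁿ (row vector multiplied on the right by the n-th power of γ) are unbounded. -/
/-- A linear recurrence `a (n + 2) = t * a (n + 1) - a n` with `2 < |t|` forces `a 1 = 0` as soon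
as the sequence has a positive period: the increments of `|a|` are monotone, hence constant. -/
theorem eq_zero_of_periodic_recurrence {a : ℕ → ℤ} {t : ℤ} (ht : 2 < |t|)
    (hrec : ∀ n, a (n + 2) = t * a (n + 1) - a n) {k : ℕ} (hk : 0 < k)
    (hper : Function.Periodic a k) : a 1 = 0 := by
  have hconvex : ∀ n, |a (n + 1)| - |a n| + |a (n + 1)| ≤ |a (n + 2)| - |a (n + 1)| := by
    intro n
    have htri : |t * a (n + 1)| ≤ |a (n + 2)| + |a n| := by
      have hsum : t * a (n + 1) = a (n + 2) + a n := by rw [hrec]; ring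
      exact hsum ▸ abs_add_le _ _
    rw [abs_mul] at htri
    nlinarith [abs_nonneg (a (n + 1))]
  have hmono : Monotone fun n => |a (n + 1)| - |a n| :=
    monotone_nat_of_le_succ fun n => by
      linarith [hconvex n, abs_nonneg (a (n + 1))]
  have hle : |a (1 + 1)| - |a 1| ≤ |a (k + 1)| - |a k| := hmono hk
  have hk0 : a k = a 0 := by simpa using hper 0
  have hk1 : a (k + 1) = a 1 := by simpa [add_comm] using hper 1
  rw [hk0, hk1] at hle
  have h0 := hconvex 0
  norm_num at h0 hle
  exact abs_nonpos_iff.mp (by linarith)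

/-- The Cayley–Hamilton recurrence for powers of a `2 × 2` matrix of determinant one. -/
theorem pow_add_two_of_det_eq_one {R : Type*} [CommRing R] (γ : Matrix (Fin 2) (Fin 2) R)
    (hdet : γ.det = 1) (n : ℕ) : γ ^ (n + 2) = γ.trace • γ ^ (n + 1) - γ ^ n := by
  have hsq : γ * γ = γ.trace • γ - 1 := by
    rw [Matrix.det_fin_two] at hdet
    ext i j
    fin_cases i <;> fin_cases j <;>
      simp [Matrix.mul_apply, Fin.sum_univ_two, Matrix.trace_fin_two] <;> grind
  rw [pow_add, pow_two, hsq, mul_sub, mul_one, Matrix.mul_smul, ← pow_succ]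

/-- The orbit of a nonzero integer row vector under a hyperbolic matrix has no repetitions. -/
theorem injective_vecMul_pow_of_hyperbolic (γ : Matrix (Fin 2) (Fin 2) ℤ) (hdet : γ.det = 1)
    (htr : 2 < |γ.trace|) (w : Fin 2 → ℤ) (hw : w ≠ 0) :
    Function.Injective fun n : ℕ => Matrix.vecMul w (γ ^ n) := by
  have hinj : ∀ n : ℕ, Function.Injective fun v => Matrix.vecMul v (γ ^ n) := fun n =>
    Matrix.vecMul_injective_of_isUnit
      (((Matrix.isUnit_iff_isUnit_det γ).mpr (hdet ▸ isUnit_one)).pow n)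
  refine Function.Injective.of_lt_imp_ne fun m n hmn heq => hw ?_
  obtain ⟨k, rfl⟩ := Nat.exists_eq_add_of_lt hmn
  have hfix : Matrix.vecMul w (γ ^ (k + 1)) = w := by
    apply hinj m
    simp only [Matrix.vecMul_vecMul, ← pow_add]
    rw [heq]
    congr 2
    ring
  apply hinj 1
  ext i
  simp only [Matrix.zero_vecMul, Pi.zero_apply]
  refine eq_zero_of_periodic_recurrence (a := fun n => Matrix.vecMul w (γ ^ n) i) htr
    (fun n => ?_) k.succ_pos fun n => ?_
  · simp only [pow_add_two_of_det_eq_one γ hdet, Matrix.vecMul_sub, Matrix.vecMul_smul,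
      Pi.sub_apply, Pi.smul_apply, smul_eq_mul]
  · change Matrix.vecMul w (γ ^ (n + (k + 1))) i = _
    rw [add_comm n, pow_add, ← Matrix.vecMul_vecMul, hfix]

/-- Let `γ ∈ SL₂(ℤ)` be hyperbolic, i.e. `|trace γ| > 2`, and let
`w ∈ ℤ²` be a nonzero row vector. Then the norms `‖w·γⁿ‖` (row vector multiplied on the
right by the `n`-th power of `γ`, viewed in `ℝ²`) tend to infinity as `n → ∞`. -/
theorem hyperbolic_orbit_unbounded (γ : Matrix (Fin 2) (Fin 2) ℤ) (hdet : γ.det = 1)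
    (htr : 2 < |γ.trace|) (w : Fin 2 → ℤ) (hw : w ≠ 0) :
    Filter.Tendsto
      (fun n : ℕ => ‖(fun i => ((Matrix.vecMul w (γ ^ n)) i : ℝ) : Fin 2 → ℝ)‖)
      Filter.atTop Filter.atTop := by
  have hnorm : ∀ v : Fin 2 → ℤ, ‖(fun i => (v i : ℝ) : Fin 2 → ℝ)‖ = ‖v‖ := fun _ => rfl
  simp only [hnorm]
  have horbit := (injective_vecMul_pow_of_hyperbolic γ hdet htr w hw).tendsto_cofinite
  rw [Nat.cofinite_eq_atTop, ← Filter.cocompact_eq_cofinite] at horbit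
  exact (tendsto_norm_cocompact_atTop (E := Fin 2 → ℤ)).comp horbit
end

section
/- Let S ⊆ ℤ² be a finite set with at least two elements, and for γ ∈ SL₂(ℤ) let S·γ = { v·γ : v ∈ S } (row vectors multiplied on the right by γ). Then the sets S·γ, as γ ranges over SL₂(ℤ), fall into infinitely many translation classes: there is an infinite subset T ⊆ SL₂(ℤ) such that for distinct γ, γ′ ∈ T there is no u ∈ ℤ² with S·γ = (S·γ′) + u. -/
open scoped Pointwise in
theorem Set.add_singleton_sub_add_singleton {G : Type*} [AddCommGroup G] (A : Set G) (u : G) :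
    (A + {u}) - (A + {u}) = A - A := by
  rw [add_sub_add_comm, Set.singleton_sub_singleton, sub_self, Set.singleton_zero, add_zero]

/-- The orbit of a nonzero vector of `ℤ²` under `SL₂(ℤ)` is infinite. -/
theorem infinite_range_vecMul_specialLinearGroup {d : Fin 2 → ℤ} (hd : d ≠ 0) :
    (Set.range fun γ : Matrix.SpecialLinearGroup (Fin 2) ℤ =>
      Matrix.vecMul d (γ : Matrix (Fin 2) (Fin 2) ℤ)).Infinite := by
  by_cases h0 : d 0 = 0
  · have h1 : d 1 ≠ 0 := fun h1 => hd (by ext i; fin_cases i <;> simp [h0, h1])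
    let g : ℤ → Matrix.SpecialLinearGroup (Fin 2) ℤ := fun n => ⟨!![1, 0; n, 1], by simp⟩
    refine (Set.infinite_range_of_injective (f := fun n => Matrix.vecMul d (g n).1) ?_).mono
      (Set.range_comp_subset_range g _)
    intro m n h
    simpa [g, Matrix.vecMul, dotProduct, h1] using congrFun h 0
  · let g : ℤ → Matrix.SpecialLinearGroup (Fin 2) ℤ := fun n => ⟨!![1, n; 0, 1], by simp⟩
    refine (Set.infinite_range_of_injective (f := fun n => Matrix.vecMul d (g n).1) ?_).mono
      (Set.range_comp_subset_range g _)
    intro m n h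
    simpa [g, Matrix.vecMul, dotProduct, h0] using congrFun h 1

open scoped Pointwise in
/-- The difference sets of the `SL₂(ℤ)`-images of a finite set with at least two elements
take infinitely many values. -/
theorem infinite_range_image_vecMul_sub_self {S : Finset (Fin 2 → ℤ)} (hS : 1 < S.card) :
    (Set.range fun γ : Matrix.SpecialLinearGroup (Fin 2) ℤ =>
      (fun v => Matrix.vecMul v (γ : Matrix (Fin 2) (Fin 2) ℤ)) '' (S : Set (Fin 2 → ℤ)) -
      (fun v => Matrix.vecMul v (γ : Matrix (Fin 2) (Fin 2) ℤ)) '' (S : Set (Fin 2 → ℤ))).Infinite := by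
  obtain ⟨p, hp, q, hq, hpq⟩ := Finset.one_lt_card.mp hS
  intro hfin
  refine infinite_range_vecMul_specialLinearGroup (sub_ne_zero.mpr hpq) ((hfin.sUnion ?_).subset ?_)
  · rintro _ ⟨γ, rfl⟩
    exact (S.finite_toSet.image _).sub (S.finite_toSet.image _)
  · rintro _ ⟨γ, rfl⟩
    refine Set.mem_sUnion.mpr ⟨_, ⟨γ, rfl⟩, ?_⟩
    simp only [Matrix.sub_vecMul]
    exact Set.sub_mem_sub ⟨p, hp, rfl⟩ ⟨q, hq, rfl⟩

/-- Let `S ⊆ ℤ²` be a finite set with at least two elements, and for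
`γ ∈ SL₂(ℤ)` let `S·γ` denote the image of `S` under right multiplication of row vectors
by `γ`. Then the sets `S·γ` fall into infinitely many translation classes: there is an
infinite set `T ⊆ SL₂(ℤ)` such that for distinct `γ, γ' ∈ T` there is no `u ∈ ℤ²` with
`S·γ = (S·γ') + u`. -/
theorem support_orbit_infinite_up_to_translation (S : Finset (Fin 2 → ℤ))
    (hS : 2 ≤ S.card) :
    ∃ T : Set (Matrix.SpecialLinearGroup (Fin 2) ℤ), T.Infinite ∧
      ∀ γ ∈ T, ∀ γ' ∈ T, γ ≠ γ' →
        ¬ ∃ u : Fin 2 → ℤ,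
            (fun v => Matrix.vecMul v (γ : Matrix (Fin 2) (Fin 2) ℤ)) '' (S : Set (Fin 2 → ℤ)) =
            (fun v => Matrix.vecMul v (γ' : Matrix (Fin 2) (Fin 2) ℤ) + u) '' (S : Set (Fin 2 → ℤ)) := by
  obtain ⟨T, hT, hinj⟩ := Set.exists_image_eq_injOn_of_subset_range (subset_refl (Set.range _))
  refine ⟨T, Set.Infinite.of_image _ (hT ▸ infinite_range_image_vecMul_sub_self hS), ?_⟩
  rintro γ hγ γ' hγ' hne ⟨u, hu⟩
  refine hne (hinj hγ hγ' ?_)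
  simp only [hu]
  rw [← Set.image_image (· + u), ← Set.add_singleton, Set.add_singleton_sub_add_singleton]
end

section
/- Let Q be a group, Δ a submonoid of Q, and Γ a subgroup of Q whose underlying set is contained in Δ. Let M be an abelian group with an action of Δ by additive endomorphisms (a monoid homomorphism Δ → End(M)). Fix elements g₁,…,g_t ∈ Δ such that the left cosets g₁Γ,…,g_tΓ ⊆ Q are pairwise disjoint and such that for every γ ∈ Γ and every j there exists i with γ·g_j ∈ g_i·Γ. For a 1-cocycle θ : Γ → M (i.e. θ(γγ′) = γ·θ(γ′) + θ(γ) for all γ, γ′ ∈ Γ), define Tθ : Γ → M by Tθ(γ) = Σ_{j=1}^t g_{σ_γ(j)}·θ(γ_j), where for each j, σ_γ(j) ∈ {1,…,t} and γ_j ∈ Γ are the unique elements with γ·g_j = g_{σ_γ(j)}·γ_j. Then: (1) Tθ is again a 1-cocycle; (2) if θ is a coboundary, i.e. θ(γ) = γ·m − m for some fixed m ∈ M, then Tθ is a coboundary; (3) if g′₁,…,g′_t ∈ Δ is another family satisfying the same hypotheses and with ⋃_j g′_j·Γ = ⋃_j g_j·Γ, then the cocycle T′θ obtained from the g′_j differs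 from Tθ by a coboundary. -/
/-- A family of representatives of pairwise disjoint left cosets of `Γ` determines both factors of
a product `g i * a` with `a ∈ Γ`. -/
lemma coset_factorization_unique {Q ι : Type*} [Group Q] {Γ : Subgroup Q} {g : ι → Q}
    (hg : ∀ i j, ∀ γ ∈ Γ, g i * γ = g j → i = j) {i j : ι} {a b : Γ}
    (h : g i * (a : Q) = g j * (b : Q)) : i = j ∧ a = b := by
  obtain rfl : i = j := hg i j (a * (b : Q)⁻¹) (Γ.mul_mem a.2 (Γ.inv_mem b.2)) (by
    rw [← mul_assoc, h, mul_inv_cancel_right])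
  exact ⟨rfl, Subtype.ext (mul_left_cancel h)⟩

/-- If left translation by `x` sends the coset of `g j` to the coset of `k (s j)`, and the cosets of
the `g j` are pairwise disjoint, then `s` is a permutation. -/
lemma coset_index_bijective {Q ι : Type*} [Group Q] [Finite ι] {Γ : Subgroup Q} {g k : ι → Q}
    (hg : ∀ i j, ∀ γ ∈ Γ, g i * γ = g j → i = j) (x : Q) {s : ι → ι} {c : ι → Γ}
    (h : ∀ j, x * g j = k (s j) * (c j : Q)) : Function.Bijective s := by
  refine Finite.injective_iff_bijective.mp fun i j hij => ?_
  refine hg i j ((c i : Q)⁻¹ * c j) (Γ.mul_mem (Γ.inv_mem (c i).2) (c j).2) ?_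
  apply mul_left_cancel (a := x)
  rw [← mul_assoc, h i, h j, hij]
  group

/-- Well-definedness of Hecke operators on first group cohomology.
`Q` is a group, `Δ` a submonoid, `Γ` a subgroup contained in `Δ`, and `M` an abelian group
with a `Δ`-action by additive endomorphisms `ρ`.  Given coset representatives
`g 1, …, g t ∈ Δ` with pairwise disjoint left cosets `g j • Γ`, permutation data
`σ, c` with `γ * g j = g (σ γ j) * c γ j`, and a 1-cocycle `θ : Γ → M`, the Hecke
transform `Tθ γ = ∑ j, ρ (g (σ γ j)) (θ (c γ j))` is (1) again a 1-cocycle;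
(2) a coboundary whenever `θ` is; and (3) modulo coboundaries independent of the choice
of representatives with the same union of cosets. -/
theorem hecke_operator_well_defined
    {Q : Type*} [Group Q] (Δ : Submonoid Q) (Γ : Subgroup Q)
    (hΓΔ : ∀ x ∈ Γ, x ∈ Δ)
    {M : Type*} [AddCommGroup M] (ρ : Δ →* AddMonoid.End M)
    (t : ℕ) (g : Fin t → Δ)
    (hdisj : ∀ i j : Fin t, ∀ γ ∈ Γ, (g i : Q) * γ = (g j : Q) → i = j)
    (σ : Γ → Fin t → Fin t) (c : Γ → Fin t → Γ)
    (hσc : ∀ (γ : Γ) (j : Fin t), (γ : Q) * (g j : Q) = (g (σ γ j) : Q) * ((c γ j : Q)))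
    (θ : Γ → M)
    (hθ : ∀ γ γ' : Γ, θ (γ * γ') = ρ ⟨(γ : Q), hΓΔ _ γ.2⟩ (θ γ') + θ γ) :
    -- (1) `Tθ` is a 1-cocycle
    (∀ γ γ' : Γ,
        (∑ j : Fin t, ρ (g (σ (γ * γ') j)) (θ (c (γ * γ') j)))
          = ρ ⟨(γ : Q), hΓΔ _ γ.2⟩ (∑ j : Fin t, ρ (g (σ γ' j)) (θ (c γ' j)))
              + ∑ j : Fin t, ρ (g (σ γ j)) (θ (c γ j))) ∧
    -- (2) if `θ` is a coboundary then so is `Tθ`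
    ((∃ m : M, ∀ γ : Γ, θ γ = ρ ⟨(γ : Q), hΓΔ _ γ.2⟩ m - m) →
      ∃ m : M, ∀ γ : Γ,
        (∑ j : Fin t, ρ (g (σ γ j)) (θ (c γ j))) = ρ ⟨(γ : Q), hΓΔ _ γ.2⟩ m - m) ∧
    -- (3) independence of the choice of coset representatives, up to coboundary
    (∀ (g' : Fin t → Δ) (σ' : Γ → Fin t → Fin t) (c' : Γ → Fin t → Γ),
      (∀ i j : Fin t, ∀ γ ∈ Γ, (g' i : Q) * γ = (g' j : Q) → i = j) →
      (∀ (γ : Γ) (j : Fin t),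
          (γ : Q) * (g' j : Q) = (g' (σ' γ j) : Q) * ((c' γ j : Q))) →
      ((⋃ j : Fin t, (fun x => (g j : Q) * x) '' (Γ : Set Q))
          = ⋃ j : Fin t, (fun x => (g' j : Q) * x) '' (Γ : Set Q)) →
      ∃ m : M, ∀ γ : Γ,
        (∑ j : Fin t, ρ (g' (σ' γ j)) (θ (c' γ j)))
          = (∑ j : Fin t, ρ (g (σ γ j)) (θ (c γ j)))
              + (ρ ⟨(γ : Q), hΓΔ _ γ.2⟩ m - m)) := by
  have actσ (γ : Γ) (j : Fin t) (m : M) :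
      ρ (g (σ γ j)) (ρ ⟨(c γ j : Q), hΓΔ _ (c γ j).2⟩ m)
        = ρ ⟨(γ : Q), hΓΔ _ γ.2⟩ (ρ (g j) m) := by
    have h : g (σ γ j) * ⟨(c γ j : Q), hΓΔ _ (c γ j).2⟩ = ⟨(γ : Q), hΓΔ _ γ.2⟩ * g j :=
      Subtype.ext (hσc γ j).symm
    have hρ := congrArg ρ h
    rw [map_mul, map_mul] at hρ
    exact DFunLike.congr_fun hρ m
  have hbij (γ : Γ) : Function.Bijective (σ γ) :=
    coset_index_bijective (k := fun j => (g j : Q)) hdisj (γ : Q) (hσc γ)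
  refine ⟨fun γ γ' => ?_, ?_, ?_⟩
  · have hmul (j : Fin t) :
        σ (γ * γ') j = σ γ (σ γ' j) ∧ c (γ * γ') j = c γ (σ γ' j) * c γ' j := by
      refine coset_factorization_unique (g := fun j => (g j : Q)) hdisj ?_
      simp only [Subgroup.coe_mul]
      rw [← hσc, Subgroup.coe_mul, mul_assoc, hσc γ' j, ← mul_assoc, hσc, mul_assoc]
    rw [map_sum, ← (hbij γ').sum_comp fun j => ρ (g (σ γ j)) (θ (c γ j)),
      ← Finset.sum_add_distrib]
    refine Finset.sum_congr rfl fun j _ => ?_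
    rw [(hmul j).1, (hmul j).2, hθ, map_add, actσ]
  · rintro ⟨m, hm⟩
    refine ⟨∑ j, ρ (g j) m, fun γ => ?_⟩
    rw [map_sum, ← (hbij γ).sum_comp fun j => ρ (g j) m, ← Finset.sum_sub_distrib]
    refine Finset.sum_congr rfl fun j _ => ?_
    rw [hm, map_sub, actσ]
  · intro g' σ' c' hdisj' hσc' hU
    have hmem (j : Fin t) : ∃ (i : Fin t) (d : Γ), (g' j : Q) = (g i : Q) * (d : Q) := by
      have hj : (g' j : Q) ∈ ⋃ j : Fin t, (fun x => (g j : Q) * x) '' (Γ : Set Q) := by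
        rw [hU]
        exact Set.mem_iUnion.mpr ⟨j, 1, Γ.one_mem, mul_one _⟩
      obtain ⟨i, d, hd, h⟩ := Set.mem_iUnion.mp hj
      exact ⟨i, ⟨d, hd⟩, h.symm⟩
    choose τ d hd using hmem
    have hτ : Function.Bijective τ :=
      coset_index_bijective (g := fun j => (g' j : Q)) (k := fun j => (g j : Q)) hdisj' 1
        (fun j => (one_mul _).trans (hd j))
    have hbij' (γ : Γ) : Function.Bijective (σ' γ) :=
      coset_index_bijective (k := fun j => (g' j : Q)) hdisj' (γ : Q) (hσc' γ)
    have hcomm (γ : Γ) (j : Fin t) :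
        σ γ (τ j) = τ (σ' γ j) ∧ c γ (τ j) * d j = d (σ' γ j) * c' γ j := by
      refine coset_factorization_unique (g := fun j => (g j : Q)) hdisj ?_
      simp only [Subgroup.coe_mul]
      rw [← mul_assoc, ← hσc, mul_assoc, ← hd, hσc', hd (σ' γ j), mul_assoc]
    refine ⟨∑ j, ρ (g (τ j)) (θ (d j)), fun γ => ?_⟩
    have key (j : Fin t) :
        ρ ⟨(γ : Q), hΓΔ _ γ.2⟩ (ρ (g (τ j)) (θ (d j))) + ρ (g (σ γ (τ j))) (θ (c γ (τ j)))
          = ρ (g' (σ' γ j)) (θ (c' γ j)) + ρ (g (τ (σ' γ j))) (θ (d (σ' γ j))) := by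
      have hg' : g' (σ' γ j)
          = g (τ (σ' γ j)) * ⟨(d (σ' γ j) : Q), hΓΔ _ (d (σ' γ j)).2⟩ :=
        Subtype.ext (hd _)
      rw [← actσ, ← map_add, ← hθ, (hcomm γ j).2, (hcomm γ j).1, hθ, map_add, hg', map_mul]
      rfl
    have hsum := Finset.sum_congr (rfl : (Finset.univ : Finset (Fin t)) = _) fun j _ => key j
    rw [Finset.sum_add_distrib, Finset.sum_add_distrib, ← map_sum,
      hτ.sum_comp fun j => ρ (g (σ γ j)) (θ (c γ j)),
      (hbij' γ).sum_comp fun j => ρ (g (τ j)) (θ (d j))] at hsum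
    rw [← add_sub_assoc, eq_sub_iff_add_eq, ← hsum, add_comm]
end

section
/- Define δ : ℝ³ → ℤ as follows: δ(a,b,c) = 0 if b − a ∈ ℤ or b − c ∈ ℤ; otherwise δ(a,b,c) = 0 if the fractional part of b − a is strictly less than the fractional part of c − a, and δ(a,b,c) = 1 otherwise. Then for all a, b, c, d ∈ ℝ one has δ(b,c,d) − δ(a,c,d) + δ(a,b,d) − δ(a,b,c) = 0. -/
open scoped Classical in
/-- The function `δ : ℝ³ → ℤ`: identifying the circle `S¹` with `ℝ/ℤ`, `δ (a, b, c) = 0`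
when `b` lies on the closed counterclockwise arc from `a` to `c`, and `1` otherwise.
Explicitly: `δ (a, b, c) = 0` if `b - a ∈ ℤ` or `b - c ∈ ℤ`; otherwise `δ (a, b, c) = 0`
if the fractional part of `b - a` is strictly less than the fractional part of `c - a`,
and `δ (a, b, c) = 1` otherwise. -/
noncomputable def arcDelta (a b c : ℝ) : ℤ :=
  if (∃ n : ℤ, b - a = (n : ℝ)) ∨ (∃ n : ℤ, b - c = (n : ℝ)) then 0
  else if Int.fract (b - a) < Int.fract (c - a) then 0 else 1

/-- `δ` is the coboundary of the 1-cochain `(a, b) ↦ fract (b - a)`. -/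
theorem arcDelta_eq_fract (a b c : ℝ) :
    (arcDelta a b c : ℝ) = Int.fract (b - a) + Int.fract (c - b) - Int.fract (c - a) := by
  obtain ⟨k, hk⟩ : ∃ k : ℤ,
      (k : ℝ) = Int.fract (b - a) + Int.fract (c - b) - Int.fract (c - a) := by
    refine ⟨⌊c - a⌋ - ⌊b - a⌋ - ⌊c - b⌋, ?_⟩
    simp only [Int.fract]
    push_cast
    ring
  rw [← hk, Int.cast_inj]
  have hp0 := Int.fract_nonneg (b - a)
  have hp1 := Int.fract_lt_one (b - a)
  have hq0 := Int.fract_nonneg (c - b)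
  have hq1 := Int.fract_lt_one (c - b)
  have hr0 := Int.fract_nonneg (c - a)
  have hr1 := Int.fract_lt_one (c - a)
  have hk_gt : -1 < k := by
    have : (-1 : ℝ) < k := by linarith
    exact_mod_cast this
  have hk_lt : k < 2 := by
    have : (k : ℝ) < 2 := by linarith
    exact_mod_cast this
  have eq_zero (h : (k : ℝ) < 1) : 0 = k := by
    have : k < 1 := by exact_mod_cast h
    omega
  unfold arcDelta
  split_ifs with h hlt
  · apply eq_zero
    rcases h with ⟨n, hn⟩ | ⟨n, hn⟩
    · have : Int.fract (b - a) = 0 := by rw [hn, Int.fract_intCast]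
      linarith
    · have : Int.fract (c - b) = 0 := by
        rw [← neg_sub, hn, ← Int.cast_neg, Int.fract_intCast]
      linarith
  · exact eq_zero (by linarith)
  · have hq : Int.fract (c - b) ≠ 0 := fun h0 ↦ by
      obtain ⟨n, hn⟩ := Int.fract_eq_zero_iff.mp h0
      exact h (Or.inr ⟨-n, by push_cast; linarith⟩)
    have hq_pos := lt_of_le_of_ne hq0 hq.symm
    have : (0 : ℝ) < k := by linarith
    have : 0 < k := by exact_mod_cast this
    omega

/-- The function `δ` satisfies the homogeneous 2-cocycle relation:
for all `a, b, c, d ∈ ℝ`, `δ(b,c,d) − δ(a,c,d) + δ(a,b,d) − δ(a,b,c) = 0`. -/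
theorem arcDelta_cocycle (a b c d : ℝ) :
    arcDelta b c d - arcDelta a c d + arcDelta a b d - arcDelta a b c = 0 := by
  rify
  simp only [arcDelta_eq_fract]
  ring
end

section
/- There exists a unique function φ : SL₂(ℤ) × SL₂(ℤ) → ℚ such that: (a) 12·φ(γ₁,γ₂) ∈ ℤ for all γ₁, γ₂; (b) φ(γ·γ₁, γ·γ₂) = φ(γ₁,γ₂) for all γ, γ₁, γ₂ ∈ SL₂(ℤ); and (c) φ(γ₁,γ₂) + φ(γ₂,γ₃) − φ(γ₁,γ₃) = δ(ℓ₀·γ₁⁻¹, ℓ₀·γ₂⁻¹, ℓ₀·γ₃⁻¹) for all γ₁, γ₂, γ₃ ∈ SL₂(ℤ), where ℓ₀ = (−1, 0) is a row vector, ℓ₀·γ⁻¹ denotes row-vector–matrix multiplication, and δ is the ray-betweenness function defined below. -/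
/-- The wedge product `u ∧ v = u₁v₂ − u₂v₁` of two vectors in `ℝ²`. -/
def wedge (u v : Fin 2 → ℝ) : ℝ := u 0 * v 1 - u 1 * v 0

/-- `v` lies on the ray of `u`: `v = t • u` for some real `t > 0`. -/
def OnRay (u v : Fin 2 → ℝ) : Prop := ∃ t : ℝ, 0 < t ∧ v = t • u

/-- `v` is strictly counterclockwise between `u` and `w`. -/
def StrictlyCCWBetween (u v w : Fin 2 → ℝ) : Prop :=
  (0 < wedge u w ∧ 0 < wedge u v ∧ 0 < wedge v w) ∨
  (wedge u w < 0 ∧ (0 < wedge u v ∨ 0 < wedge v w)) ∨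
  (wedge u w = 0 ∧ ¬ OnRay u w ∧ 0 < wedge u v)

open scoped Classical in
/-- The ray-betweenness function: `δ (u, v, w) = 0` if `v` lies on the ray of `u`, or `v`
lies on the ray of `w`, or `v` is strictly counterclockwise between `u` and `w`;
`δ (u, v, w) = 1` otherwise. -/
noncomputable def rayDelta (u v w : Fin 2 → ℝ) : ℤ :=
  if OnRay u v ∨ OnRay w v ∨ StrictlyCCWBetween u v w then 0 else 1

/-- The vector `ℓ₀ · γ⁻¹ ∈ ℝ²`, where `ℓ₀ = (−1, 0)` is a row vector multiplied on the
right by the matrix `γ⁻¹` for `γ ∈ SL₂(ℤ)`. -/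
noncomputable def rayOfSL (γ : Matrix.SpecialLinearGroup (Fin 2) ℤ) : Fin 2 → ℝ :=
  fun i => ((Matrix.vecMul ![(-1 : ℤ), 0]
    ((γ⁻¹ : Matrix.SpecialLinearGroup (Fin 2) ℤ) : Matrix (Fin 2) (Fin 2) ℤ)) i : ℝ)

/-! ### The Dedekind sum through the Euclidean algorithm -/

/-- The right-hand side of the reciprocity law for twelve times the Dedekind sum. -/
def reciprocityTerm (h k : ℤ) : ℚ := (h : ℚ) / k + (k : ℚ) / h + 1 / ((h : ℚ) * k) - 3

/-- Twelve times the Dedekind sum `s(d, b)` for `b > 0` coprime to `d`, computed by the Euclidean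
algorithm. -/
def dedekindTwelve (b d : ℤ) : ℚ :=
  if 1 < b then reciprocityTerm (d % b) b - dedekindTwelve (d % b) b else 0
termination_by b.toNat
decreasing_by
  have := Int.emod_lt_of_pos d (show 0 < b by omega)
  omega

theorem dedekindTwelve_of_le_one {b : ℤ} (hb : b ≤ 1) (d : ℤ) : dedekindTwelve b d = 0 := by
  rw [dedekindTwelve, if_neg (by omega)]

theorem dedekindTwelve_congr (b : ℤ) {d e : ℤ} (h : d % b = e % b) :
    dedekindTwelve b d = dedekindTwelve b e := by
  rw [dedekindTwelve, h, ← dedekindTwelve]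

theorem dedekindTwelve_add_self (b d : ℤ) : dedekindTwelve b (b + d) = dedekindTwelve b d :=
  dedekindTwelve_congr b (by simp)

theorem dedekindTwelve_of_lt {b d : ℤ} (hd : 0 < d) (hdb : d < b) :
    dedekindTwelve b d = reciprocityTerm d b - dedekindTwelve d b := by
  rw [dedekindTwelve, if_pos (by omega), Int.emod_eq_of_lt hd.le hdb]

theorem dedekindTwelve_reciprocity {h k : ℤ} (hh : 0 < h) (hk : 0 < k) (hc : IsCoprime h k) :
    dedekindTwelve h k + dedekindTwelve k h = reciprocityTerm h k := by
  rcases lt_trichotomy h k with hlt | rfl | hlt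
  · rw [dedekindTwelve_of_lt hh hlt]; ring
  · have h1 : h = 1 := by
      have := Int.isUnit_iff.mp (isCoprime_self.mp hc)
      omega
    subst h1
    rw [dedekindTwelve_of_le_one le_rfl]
    norm_num [reciprocityTerm]
  · rw [dedekindTwelve_of_lt hk hlt]
    simp only [reciprocityTerm]
    ring

theorem dedekindTwelve_neg {b d : ℤ} (hb : 0 < b) (hc : IsCoprime b d) :
    dedekindTwelve b (-d) = -dedekindTwelve b d := by
  rcases (show b = 1 ∨ 1 < b by omega) with rfl | hb1
  · simp [dedekindTwelve_of_le_one]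
  obtain ⟨r, hr⟩ : ∃ r, r = d % b := ⟨_, rfl⟩
  have hdr : d = b * (d / b) + r := by rw [hr, Int.mul_ediv_add_emod]
  have hcr : IsCoprime b r := by
    rw [hdr] at hc
    exact IsCoprime.of_mul_add_left_right hc
  have hr0 : 0 ≤ r := hr ▸ Int.emod_nonneg d hb.ne'
  have hrb : r < b := hr ▸ Int.emod_lt_of_pos d hb
  have hrne : r ≠ 0 := by
    rintro rfl
    have := Int.isUnit_iff.mp (isCoprime_zero_right.mp hcr)
    omega
  have hcr' : IsCoprime r (b - r) := by
    have := (IsCoprime.add_mul_left_right hcr.symm (-1))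
    rwa [show b + r * -1 = b - r by ring] at this
  rw [dedekindTwelve_congr b (show d % b = r % b by rw [hr, Int.emod_emod_of_dvd _ dvd_rfl]),
    dedekindTwelve_congr b (show -d % b = (b - r) % b by
      exact Int.emod_eq_emod_iff_emod_sub_eq_zero.mpr
        (Int.emod_eq_zero_of_dvd ⟨-(d / b) - 1, by linear_combination -hdr⟩)),
    dedekindTwelve_of_lt (by omega : 0 < r) hrb,
    dedekindTwelve_of_lt (by omega : 0 < b - r) (by omega)]
  have h1 := dedekindTwelve_reciprocity (by omega : 0 < r) (by omega : 0 < b - r) hcr'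
  have h2 := dedekindTwelve_add_self r (b - r)
  have h3 := dedekindTwelve_add_self (b - r) r
  rw [add_sub_cancel] at h2
  rw [sub_add_cancel] at h3
  rw [h2, h3]
  have key : reciprocityTerm r b + reciprocityTerm (b - r) b = reciprocityTerm r (b - r) := by
    have e1 : (r : ℚ) ≠ 0 := by exact_mod_cast hrne
    have e2 : (b : ℚ) ≠ 0 := by exact_mod_cast hb.ne'
    have e3 : (b : ℚ) - r ≠ 0 := by
      have : b - r ≠ 0 := by omega
      exact_mod_cast this
    simp only [reciprocityTerm]
    push_cast
    field_simp
    ring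
  linarith

/-! ### The Rademacher function in terms of matrix entries -/

/-- Twelve times the normalised Rademacher function of the matrix with rows `(a, b)`, `(c, d)`. -/
def rademacherEntries (a b c d : ℤ) : ℚ :=
  if b = 0 then (if d = 1 then (c : ℚ) else 6 - c)
  else if 0 < b then ((a : ℚ) + d) / b - dedekindTwelve b d + 9
  else ((a : ℚ) + d) / b + dedekindTwelve (-b) d + 3

theorem rademacherEntries_unipotent_mul {a b c d : ℤ} (hdet : a * d - b * c = 1) :
    rademacherEntries a b (a + c) (b + d) = rademacherEntries a b c d + 1 := by
  simp only [rademacherEntries]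
  rcases lt_trichotomy b 0 with hb | rfl | hb
  · have hb' : (b : ℚ) ≠ 0 := by exact_mod_cast hb.ne
    have h := dedekindTwelve_congr (-b) (show (b + d) % (-b) = d % (-b) by simp)
    rw [if_neg hb.ne, if_neg hb.not_gt, if_neg hb.ne, if_neg hb.not_gt, h]
    push_cast
    field_simp
    ring
  · have had : a * d = 1 := by linarith
    rcases Int.mul_eq_one_iff_eq_one_or_neg_one.mp had with ⟨rfl, rfl⟩ | ⟨rfl, rfl⟩
    · simp; ring
    · simp; ring
  · have hb' : (b : ℚ) ≠ 0 := by exact_mod_cast hb.ne'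
    rw [if_neg hb.ne', if_pos hb, if_neg hb.ne', if_pos hb, dedekindTwelve_add_self]
    push_cast
    field_simp
    ring

theorem rademacherEntries_inversion_mul {a b c d : ℤ} (hdet : a * d - b * c = 1) :
    rademacherEntries (-c) (-d) a b =
      rademacherEntries a b c d + 3 - (if 0 < b ∧ 0 ≤ d then 12 else 0) := by
  have hdetQ : (a : ℚ) * d - b * c = 1 := by exact_mod_cast hdet
  rcases eq_or_ne b 0 with rfl | hb
  · have had : a * d = 1 := by linarith
    rcases Int.mul_eq_one_iff_eq_one_or_neg_one.mp had with ⟨rfl, rfl⟩ | ⟨rfl, rfl⟩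
    · simp [rademacherEntries, dedekindTwelve_of_le_one]
    · simp [rademacherEntries, dedekindTwelve_of_le_one]; ring
  rcases eq_or_ne d 0 with rfl | hd
  · have hbc : b * -c = 1 := by linarith
    rcases Int.mul_eq_one_iff_eq_one_or_neg_one.mp hbc with ⟨rfl, hc⟩ | ⟨rfl, hc⟩
    · simp [rademacherEntries, dedekindTwelve_of_le_one]; ring
    · simp [rademacherEntries, dedekindTwelve_of_le_one]; ring
  have hbQ : (b : ℚ) ≠ 0 := by exact_mod_cast hb
  have hdQ : (d : ℚ) ≠ 0 := by exact_mod_cast hd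
  have hc : IsCoprime b d := ⟨-c, a, by linarith⟩
  have hfrac : (a : ℚ) / b = c / d + 1 / (b * d) := by
    field_simp
    linarith
  simp only [rademacherEntries, if_neg hb, if_neg (neg_ne_zero.mpr hd)]
  rcases hb.lt_or_gt with hb' | hb' <;> rcases hd.lt_or_gt with hd' | hd'
  · have h1 := dedekindTwelve_reciprocity (neg_pos.mpr hb') (neg_pos.mpr hd') hc.neg_neg
    have h2 := dedekindTwelve_neg (neg_pos.mpr hb') hc.neg_left
    have h3 := dedekindTwelve_neg (neg_pos.mpr hd') hc.symm.neg_left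
    rw [if_pos (by omega), if_neg (by omega), if_neg (by omega)]
    simp only [reciprocityTerm] at h1
    push_cast at h1 ⊢
    simp only [add_div, hfrac, neg_div, div_neg, neg_neg, neg_mul, mul_neg] at *
    linarith
  · have h1 := dedekindTwelve_reciprocity (neg_pos.mpr hb') hd' hc.neg_left
    have h2 := dedekindTwelve_neg hd' hc.symm
    rw [if_neg (by omega), if_neg (by omega), if_neg (by omega), neg_neg]
    simp only [reciprocityTerm] at h1
    push_cast at h1 ⊢
    simp only [add_div, hfrac, neg_div, div_neg, neg_mul] at *
    linarith
  · have h1 := dedekindTwelve_reciprocity hb' (neg_pos.mpr hd') hc.neg_right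
    have h2 := dedekindTwelve_neg hb' hc
    rw [if_pos (by omega), if_pos hb', if_neg (by omega)]
    simp only [reciprocityTerm] at h1
    push_cast at h1 ⊢
    simp only [add_div, hfrac, neg_div, div_neg, mul_neg] at *
    linarith
  · have h1 := dedekindTwelve_reciprocity hb' hd' hc
    rw [if_neg (by omega), if_pos hb', if_pos (by omega), neg_neg]
    simp only [reciprocityTerm] at h1
    push_cast at h1 ⊢
    simp only [add_div, hfrac, neg_div, div_neg] at *
    linarith

/-! ### The ray-betweenness function as a coboundary -/

/-- The half-open half-plane of vectors with argument in `[0, π)`. -/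
def UpperHalf (u : Fin 2 → ℝ) : Prop := 0 < u 1 ∨ (u 1 = 0 ∧ 0 < u 0)

open scoped Classical in
/-- `1` if the argument of `v` in `[0, 2π)` is smaller than that of `u`, and `0` otherwise. -/
noncomputable def argDescent (u v : Fin 2 → ℝ) : ℤ :=
  if (UpperHalf v ∧ ¬ UpperHalf u) ∨ ((UpperHalf u ↔ UpperHalf v) ∧ wedge u v < 0) then 1 else 0

theorem upperHalf_neg_iff {u : Fin 2 → ℝ} (hu : u ≠ 0) : UpperHalf (-u) ↔ ¬ UpperHalf u := by
  have h : u 0 ≠ 0 ∨ u 1 ≠ 0 := by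
    by_contra! h
    exact hu (by ext i; fin_cases i <;> simp [h])
  simp only [UpperHalf, Pi.neg_apply]
  grind

theorem wedge_neg_left (u v : Fin 2 → ℝ) : wedge (-u) v = -wedge u v := by
  simp [wedge]; ring

theorem wedge_neg_right (u v : Fin 2 → ℝ) : wedge u (-v) = -wedge u v := by
  simp [wedge]; ring

theorem wedge_swap (u v : Fin 2 → ℝ) : wedge v u = -wedge u v := by
  simp [wedge]; ring

theorem onRay_iff {u v : Fin 2 → ℝ} (hu : u ≠ 0) (hv : v ≠ 0) :
    OnRay u v ↔ wedge u v = 0 ∧ (UpperHalf u ↔ UpperHalf v) := by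
  have upper : ∀ {u v : Fin 2 → ℝ}, UpperHalf u → UpperHalf v → wedge u v = 0 → OnRay u v := by
    intro u v hu hv h
    simp only [wedge] at h
    rcases hu with hu | ⟨hu, hu'⟩
    · have hv1 : 0 < v 1 := by
        rcases hv with hv | ⟨hv, hv'⟩
        · exact hv
        · rw [hv] at h; nlinarith
      refine ⟨v 1 / u 1, by positivity, ?_⟩
      ext i; fin_cases i
      · simp; field_simp; linarith
      · simp; field_simp
    · have hv1 : v 1 = 0 := by
        rw [hu] at h
        have : u 0 * v 1 = 0 := by linarith
        exact (mul_eq_zero.mp this).resolve_left hu'.ne'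
      have hv0 : 0 < v 0 := by
        rcases hv with hv | ⟨hv, hv'⟩
        · exact absurd hv1 hv.ne'
        · exact hv'
      refine ⟨v 0 / u 0, by positivity, ?_⟩
      ext i; fin_cases i
      · simp; field_simp
      · simp [hv1, hu]
  constructor
  · rintro ⟨t, ht, rfl⟩
    refine ⟨by simp [wedge]; ring, ?_⟩
    simp [UpperHalf, ht, ht.ne', mul_pos_iff_of_pos_left]
  · rintro ⟨h, huv⟩
    by_cases hu' : UpperHalf u
    · exact upper hu' (huv.mp hu') h
    · obtain ⟨t, ht, htv⟩ := upper ((upperHalf_neg_iff hu).mpr hu')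
        ((upperHalf_neg_iff hv).mpr (huv.not.mp hu'))
        (by rw [wedge_neg_left, wedge_neg_right, h]; simp)
      exact ⟨t, ht, by rw [smul_neg, neg_inj] at htv; exact htv⟩

theorem UpperHalf.wedge_nonneg_trans {u v w : Fin 2 → ℝ} (hu : UpperHalf u) (hv : UpperHalf v)
    (hw : UpperHalf w) (huv : 0 ≤ wedge u v) (hvw : 0 ≤ wedge v w) :
    0 ≤ wedge u w ∧ (0 < wedge u v ∨ 0 < wedge v w → 0 < wedge u w) := by
  have h1 : wedge u w * v 1 = wedge u v * w 1 + wedge v w * u 1 := by simp only [wedge]; ring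
  have h0 : wedge u w * v 0 = wedge u v * w 0 + wedge v w * u 0 := by simp only [wedge]; ring
  have hu1 : 0 ≤ u 1 := by rcases hu with h | h <;> linarith
  rcases hv with hv | ⟨hv, hv'⟩
  · have hw1 : 0 < w 1 := by
      rcases hw with h | ⟨h, h'⟩
      · exact h
      · rw [wedge, h] at hvw
        nlinarith
    refine ⟨nonneg_of_mul_nonneg_left (b := v 1) (by rw [h1]; positivity) hv, fun h => ?_⟩
    have huv' : 0 < wedge u v ∨ 0 < u 1 := by
      rcases hu with hu | ⟨hu, hu'⟩
      · exact Or.inr hu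
      · left
        rw [wedge, hu]
        nlinarith
    refine pos_of_mul_pos_left (b := v 1) ?_ hv.le
    rw [h1]
    rcases huv' with h' | h'
    · positivity
    · rcases h with h | h <;> positivity
  · have huv0 : wedge u v = -(u 1 * v 0) := by rw [wedge, hv]; ring
    have hu0 : u 1 = 0 := by nlinarith
    have hu' : 0 < u 0 := by
      rcases hu with h | h
      · exact absurd hu0 h.ne'
      · exact h.2
    have huvz : wedge u v = 0 := by rw [huv0, hu0]; ring
    rw [huvz, zero_mul, zero_add] at h0
    refine ⟨nonneg_of_mul_nonneg_left (b := v 0) (by rw [h0]; positivity) hv', fun h => ?_⟩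
    have h' : 0 < wedge v w := h.resolve_left (by rw [huvz]; exact lt_irrefl 0)
    exact pos_of_mul_pos_left (b := v 0) (by rw [h0]; positivity) hv'.le

/-- Within the half-plane, the sign of the wedge product is a total preorder by argument. -/
theorem UpperHalf.wedge_trans {u v w : Fin 2 → ℝ} (hu : UpperHalf u) (hv : UpperHalf v)
    (hw : UpperHalf w) :
    (0 ≤ wedge u v → 0 ≤ wedge v w →
      0 ≤ wedge u w ∧ (0 < wedge u v ∨ 0 < wedge v w → 0 < wedge u w)) ∧
    (wedge u v ≤ 0 → wedge v w ≤ 0 →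
      wedge u w ≤ 0 ∧ (wedge u v < 0 ∨ wedge v w < 0 → wedge u w < 0)) := by
  refine ⟨hu.wedge_nonneg_trans hv hw, fun huv hvw => ?_⟩
  have h := hw.wedge_nonneg_trans hv hu
  rw [wedge_swap v w, wedge_swap u v, wedge_swap u w] at h
  simp only [neg_nonneg, neg_pos] at h
  exact ⟨(h hvw huv).1, fun h' => (h hvw huv).2 h'.symm⟩

theorem rayDelta_eq_argDescent {u v w : Fin 2 → ℝ} (hu : u ≠ 0) (hv : v ≠ 0) (hw : w ≠ 0) :
    rayDelta u v w = argDescent u v + argDescent v w - argDescent u w := by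
  have hP : (OnRay u v ∨ OnRay w v ∨ StrictlyCCWBetween u v w) ↔
      ((wedge u v = 0 ∧ (UpperHalf u ↔ UpperHalf v)) ∨
        (wedge v w = 0 ∧ (UpperHalf w ↔ UpperHalf v)) ∨
        (0 < wedge u w ∧ 0 < wedge u v ∧ 0 < wedge v w) ∨
        (wedge u w < 0 ∧ (0 < wedge u v ∨ 0 < wedge v w)) ∨
        (wedge u w = 0 ∧ ¬ (UpperHalf u ↔ UpperHalf w) ∧ 0 < wedge u v)) := by
    rw [StrictlyCCWBetween, onRay_iff hu hv, onRay_iff hw hv, onRay_iff hu hw, wedge_swap v w,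
      neg_eq_zero]
    refine or_congr_right (or_congr_right (or_congr_right (or_congr_right ?_)))
    exact and_congr_right fun h => by rw [h]; simp only [true_and]
  have hnu := upperHalf_neg_iff hu
  have hnv := upperHalf_neg_iff hv
  have hnw := upperHalf_neg_iff hw
  classical
  rw [rayDelta, if_congr hP rfl rfl]
  simp only [argDescent]
  clear hP
  by_cases cu : UpperHalf u <;> by_cases cv : UpperHalf v <;> by_cases cw : UpperHalf w <;>
  [ have key := cu.wedge_trans cv cw;
    have key := cu.wedge_trans cv (hnw.mpr cw);
    have key := cu.wedge_trans (hnv.mpr cv) cw;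
    have key := cu.wedge_trans (hnv.mpr cv) (hnw.mpr cw);
    have key := (hnu.mpr cu).wedge_trans cv cw;
    have key := (hnu.mpr cu).wedge_trans cv (hnw.mpr cw);
    have key := (hnu.mpr cu).wedge_trans (hnv.mpr cv) cw;
    have key := (hnu.mpr cu).wedge_trans (hnv.mpr cv) (hnw.mpr cw)] <;>
  · try simp only [wedge_neg_left, wedge_neg_right] at key
    simp only [cu, cv, cw]
    clear hnu hnv hnw cu cv cw hu hv hw
    generalize wedge u v = A at *
    generalize wedge v w = B at *
    generalize wedge u w = C at *
    grind

/-! ### Rays of elements of `SL₂(ℤ)` -/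

open Matrix in
theorem rayOfSL_eq (γ : SpecialLinearGroup (Fin 2) ℤ) :
    rayOfSL γ = ![-(γ 1 1 : ℝ), (γ 0 1 : ℝ)] := by
  ext i
  fin_cases i <;>
    simp [rayOfSL, adjugate_fin_two, vecMul, dotProduct]

open Matrix in
theorem det_entries (γ : SpecialLinearGroup (Fin 2) ℤ) : γ 0 0 * γ 1 1 - γ 0 1 * γ 1 0 = 1 := by
  rw [← det_fin_two, γ.det_coe]

open Matrix in
theorem rayOfSL_ne_zero (γ : SpecialLinearGroup (Fin 2) ℤ) : rayOfSL γ ≠ 0 := by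
  intro h
  rw [rayOfSL_eq] at h
  have h0 := congrFun h 0
  have h1 := congrFun h 1
  simp at h0 h1
  have := det_entries γ
  simp [h0, h1] at this

open Matrix in
theorem rayOfSL_mul (γ γ₁ : SpecialLinearGroup (Fin 2) ℤ) :
    rayOfSL (γ * γ₁) = ![(γ 1 1 : ℝ) * rayOfSL γ₁ 0 - γ 1 0 * rayOfSL γ₁ 1,
      -(γ 0 1 : ℝ) * rayOfSL γ₁ 0 + γ 0 0 * rayOfSL γ₁ 1] := by
  simp only [rayOfSL_eq]
  ext i
  fin_cases i <;> simp [mul_apply, Fin.sum_univ_two] <;> ring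

open Matrix in
theorem wedge_rayOfSL_mul (γ γ₁ γ₂ : SpecialLinearGroup (Fin 2) ℤ) :
    wedge (rayOfSL (γ * γ₁)) (rayOfSL (γ * γ₂)) = wedge (rayOfSL γ₁) (rayOfSL γ₂) := by
  have h : (γ 0 0 : ℝ) * γ 1 1 - γ 0 1 * γ 1 0 = 1 := by exact_mod_cast det_entries γ
  simp only [wedge, rayOfSL_mul, cons_val_zero, cons_val_one]
  linear_combination (rayOfSL γ₁ 0 * rayOfSL γ₂ 1 - rayOfSL γ₁ 1 * rayOfSL γ₂ 0) * h

open Matrix in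
theorem onRay_rayOfSL_mul (γ γ₁ γ₂ : SpecialLinearGroup (Fin 2) ℤ) :
    OnRay (rayOfSL (γ * γ₁)) (rayOfSL (γ * γ₂)) ↔ OnRay (rayOfSL γ₁) (rayOfSL γ₂) := by
  have forward : ∀ γ γ₁ γ₂ : SpecialLinearGroup (Fin 2) ℤ, OnRay (rayOfSL γ₁) (rayOfSL γ₂) →
      OnRay (rayOfSL (γ * γ₁)) (rayOfSL (γ * γ₂)) := by
    rintro γ γ₁ γ₂ ⟨t, ht, h⟩
    refine ⟨t, ht, ?_⟩
    rw [rayOfSL_mul, rayOfSL_mul, h]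
    ext i
    fin_cases i <;> simp <;> ring
  refine ⟨fun h => ?_, forward γ γ₁ γ₂⟩
  simpa using forward γ⁻¹ _ _ h

open Matrix in
theorem rayDelta_rayOfSL_mul (γ γ₁ γ₂ γ₃ : SpecialLinearGroup (Fin 2) ℤ) :
    rayDelta (rayOfSL (γ * γ₁)) (rayOfSL (γ * γ₂)) (rayOfSL (γ * γ₃)) =
      rayDelta (rayOfSL γ₁) (rayOfSL γ₂) (rayOfSL γ₃) := by
  classical
  refine if_congr ?_ rfl rfl
  simp only [StrictlyCCWBetween, onRay_rayOfSL_mul, wedge_rayOfSL_mul]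

open Matrix in
theorem rayDelta_rayOfSL (γ₁ γ₂ γ₃ : SpecialLinearGroup (Fin 2) ℤ) :
    rayDelta (rayOfSL γ₁) (rayOfSL γ₂) (rayOfSL γ₃) =
      argDescent (rayOfSL γ₁) (rayOfSL γ₂) + argDescent (rayOfSL γ₂) (rayOfSL γ₃) -
        argDescent (rayOfSL γ₁) (rayOfSL γ₃) :=
  rayDelta_eq_argDescent (rayOfSL_ne_zero γ₁) (rayOfSL_ne_zero γ₂) (rayOfSL_ne_zero γ₃)

theorem argDescent_self (u : Fin 2 → ℝ) : argDescent u u = 0 := by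
  have h : wedge u u = 0 := by simp only [wedge]; ring
  simp [argDescent, h]

/-! ### Generators of `SL₂(ℤ)` -/

open Matrix in
/-- The lower unipotent generator of `SL₂(ℤ)`, which fixes the row vector `(-1, 0)`. -/
def lowerUnipotent : SpecialLinearGroup (Fin 2) ℤ := ⟨!![1, 0; 1, 1], by simp⟩

open Matrix in
theorem coe_lowerUnipotent : (lowerUnipotent : Matrix (Fin 2) (Fin 2) ℤ) = !![1, 0; 1, 1] := rfl

open Matrix in
theorem sl2z_induction {P : SpecialLinearGroup (Fin 2) ℤ → Prop} (one : P 1)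
    (mul : ∀ γ γ', P γ → P γ' → P (γ * γ')) (inv : ∀ γ, P γ → P γ⁻¹)
    (hS : P ModularGroup.S) (hU : P lowerUnipotent) (γ : SpecialLinearGroup (Fin 2) ℤ) : P γ := by
  have hT : ModularGroup.T = ModularGroup.S⁻¹ * lowerUnipotent⁻¹ * ModularGroup.S := by
    rw [mul_assoc, eq_inv_mul_iff_mul_eq, eq_inv_mul_iff_mul_eq]
    decide
  have h : γ ∈ Subgroup.closure {ModularGroup.S, ModularGroup.T} := by
    simp [SpecialLinearGroup.SL2Z_generators]
  induction h using Subgroup.closure_induction with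
  | mem x hx =>
    rcases hx with rfl | rfl
    · exact hS
    · rw [hT]
      exact mul _ _ (mul _ _ (inv _ hS) (inv _ hU)) hS
  | one => exact one
  | mul x y _ _ hx hy => exact mul x y hx hy
  | inv x _ hx => exact inv x hx

open Matrix in
theorem eq_zero_of_forall_mul_eq_add {h : SpecialLinearGroup (Fin 2) ℤ → ℚ}
    (hmul : ∀ γ γ', h (γ * γ') = h γ + h γ') (γ : SpecialLinearGroup (Fin 2) ℤ) : h γ = 0 := by
  have h1 : h 1 = 0 := by simpa using hmul 1 1
  have hS : h ModularGroup.S = 0 := by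
    have e : ModularGroup.S * ModularGroup.S * (ModularGroup.S * ModularGroup.S) = 1 := by decide
    have := congrArg h e
    simp only [hmul, h1] at this
    linarith
  have hU : h lowerUnipotent = 0 := by
    have e : lowerUnipotent * ModularGroup.S * (lowerUnipotent * ModularGroup.S) *
        (lowerUnipotent * ModularGroup.S) = 1 := by decide
    have := congrArg h e
    simp only [hmul, h1, hS] at this
    linarith
  refine sl2z_induction (P := fun γ => h γ = 0) h1 (fun a b ha hb => by rw [hmul, ha, hb, add_zero])
    (fun a ha => ?_) hS hU γ
  have := hmul a a⁻¹
  rwa [mul_inv_cancel, h1, ha, zero_add, eq_comm] at this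

/-! ### The Rademacher function on `SL₂(ℤ)` -/

open Matrix in
/-- Twelve times the normalised Rademacher function of one variable. -/
def rademacherTwelve (γ : SpecialLinearGroup (Fin 2) ℤ) : ℚ :=
  rademacherEntries (γ 0 0) (γ 0 1) (γ 1 0) (γ 1 1)

theorem rademacherTwelve_one : rademacherTwelve 1 = 0 := by
  simp [rademacherTwelve, rademacherEntries]

theorem rademacherTwelve_S : rademacherTwelve ModularGroup.S = 3 := by
  simp [rademacherTwelve, rademacherEntries, ModularGroup.S, dedekindTwelve_of_le_one]

theorem rademacherTwelve_lowerUnipotent : rademacherTwelve lowerUnipotent = 1 := by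
  simp [rademacherTwelve, rademacherEntries, lowerUnipotent]

open Matrix in
theorem rademacherTwelve_S_mul (γ : SpecialLinearGroup (Fin 2) ℤ) :
    rademacherTwelve (ModularGroup.S * γ) =
      rademacherTwelve γ + 3 - (if 0 < γ 0 1 ∧ 0 ≤ γ 1 1 then 12 else 0) := by
  rw [rademacherTwelve, rademacherTwelve, ← rademacherEntries_inversion_mul (det_entries γ)]
  simp [ModularGroup.coe_S, mul_apply, Fin.sum_univ_two]

open Matrix in
theorem rademacherTwelve_lowerUnipotent_mul (γ : SpecialLinearGroup (Fin 2) ℤ) :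
    rademacherTwelve (lowerUnipotent * γ) = rademacherTwelve γ + 1 := by
  rw [rademacherTwelve, rademacherTwelve, ← rademacherEntries_unipotent_mul (det_entries γ)]
  simp [coe_lowerUnipotent, mul_apply, Fin.sum_univ_two]

open Matrix in
theorem rayDelta_rayOfSL_S_mul (γ : SpecialLinearGroup (Fin 2) ℤ) :
    rayDelta (rayOfSL 1) (rayOfSL ModularGroup.S) (rayOfSL (ModularGroup.S * γ)) =
      if 0 < γ 0 1 ∧ 0 ≤ γ 1 1 then 1 else 0 := by
  have hne : γ 1 1 ≠ 0 ∨ γ 0 1 ≠ 0 := by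
    by_contra! h
    have := det_entries γ
    simp [h] at this
  rw [rayDelta_rayOfSL]
  simp only [rayOfSL_eq, argDescent, UpperHalf, wedge]
  simp [ModularGroup.coe_S, mul_apply, Fin.sum_univ_two]
  grind

open Matrix in
theorem rademacherTwelve_cocycle (γ γ' : SpecialLinearGroup (Fin 2) ℤ) :
    rademacherTwelve γ + rademacherTwelve γ' - rademacherTwelve (γ * γ') =
      12 * (rayDelta (rayOfSL 1) (rayOfSL γ) (rayOfSL (γ * γ')) : ℚ) := by
  induction γ using sl2z_induction generalizing γ' with
  | one =>
    rw [one_mul, rademacherTwelve_one, rayDelta_rayOfSL, argDescent_self]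
    simp
  | mul a b ha hb =>
    have h1 := ha (b * γ')
    have h2 := hb γ'
    have h3 := ha b
    rw [← rayDelta_rayOfSL_mul a, mul_one] at h2
    rw [mul_assoc]
    simp only [rayDelta_rayOfSL] at *
    push_cast at *
    linarith
  | inv a ha =>
    have h1 := ha a⁻¹
    have h2 := ha (a⁻¹ * γ')
    rw [mul_inv_cancel, rademacherTwelve_one] at h1
    rw [mul_inv_cancel_left] at h2
    rw [← rayDelta_rayOfSL_mul a, mul_one, mul_inv_cancel, mul_inv_cancel_left]
    simp only [rayDelta_rayOfSL, argDescent_self] at *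
    push_cast at *
    linarith
  | hS =>
    rw [rayDelta_rayOfSL_S_mul, rademacherTwelve_S_mul, rademacherTwelve_S]
    split_ifs <;> push_cast <;> ring
  | hU =>
    have h : rayOfSL lowerUnipotent = rayOfSL 1 := by
      rw [rayOfSL_eq, rayOfSL_eq]
      simp [coe_lowerUnipotent]
    rw [rayDelta_rayOfSL, h, argDescent_self, rademacherTwelve_lowerUnipotent_mul,
      rademacherTwelve_lowerUnipotent]
    push_cast
    ring

open Matrix in
theorem exists_int_eq_rademacherTwelve (γ : SpecialLinearGroup (Fin 2) ℤ) :
    ∃ n : ℤ, rademacherTwelve γ = n := by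
  refine sl2z_induction (P := fun γ => ∃ n : ℤ, rademacherTwelve γ = n) ⟨0, ?_⟩ ?_ ?_ ⟨3, ?_⟩
    ⟨1, ?_⟩ γ
  · simp [rademacherTwelve_one]
  · rintro a b ⟨m, hm⟩ ⟨n, hn⟩
    have h := rademacherTwelve_cocycle a b
    rw [hm, hn] at h
    exact ⟨m + n - 12 * rayDelta (rayOfSL 1) (rayOfSL a) (rayOfSL (a * b)), by
      push_cast
      linarith⟩
  · rintro a ⟨m, hm⟩
    have h := rademacherTwelve_cocycle a a⁻¹
    rw [mul_inv_cancel, rademacherTwelve_one, hm] at h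
    exact ⟨12 * rayDelta (rayOfSL 1) (rayOfSL a) (rayOfSL 1) - m, by
      push_cast
      linarith⟩
  · simp [rademacherTwelve_S]
  · simp [rademacherTwelve_lowerUnipotent]

/-- There exists a unique function
`φ : SL₂(ℤ) × SL₂(ℤ) → ℚ` such that (a) `12·φ(γ₁,γ₂) ∈ ℤ`; (b) `φ` is invariant under
simultaneous left translation; and (c) `φ(γ₁,γ₂) + φ(γ₂,γ₃) − φ(γ₁,γ₃) =
δ(ℓ₀·γ₁⁻¹, ℓ₀·γ₂⁻¹, ℓ₀·γ₃⁻¹)` for all `γ₁, γ₂, γ₃ ∈ SL₂(ℤ)`. -/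
theorem rademacher_function_exists_unique :
    ∃! φ : Matrix.SpecialLinearGroup (Fin 2) ℤ × Matrix.SpecialLinearGroup (Fin 2) ℤ → ℚ,
      (∀ γ₁ γ₂, ∃ n : ℤ, 12 * φ (γ₁, γ₂) = (n : ℚ)) ∧
      (∀ γ γ₁ γ₂, φ (γ * γ₁, γ * γ₂) = φ (γ₁, γ₂)) ∧
      (∀ γ₁ γ₂ γ₃, φ (γ₁, γ₂) + φ (γ₂, γ₃) - φ (γ₁, γ₃)
        = (rayDelta (rayOfSL γ₁) (rayOfSL γ₂) (rayOfSL γ₃) : ℚ)) := by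
  refine existsUnique_of_exists_of_unique
    ⟨fun p => rademacherTwelve (p.1⁻¹ * p.2) / 12, fun γ₁ γ₂ => ?_, fun γ γ₁ γ₂ => ?_,
      fun γ₁ γ₂ γ₃ => ?_⟩ ?_
  · obtain ⟨n, hn⟩ := exists_int_eq_rademacherTwelve (γ₁⁻¹ * γ₂)
    exact ⟨n, by rw [← hn]; ring⟩
  · simp only [mul_inv_rev, mul_assoc, inv_mul_cancel_left]
  · have h := rademacherTwelve_cocycle (γ₁⁻¹ * γ₂) (γ₂⁻¹ * γ₃)
    rw [← rayDelta_rayOfSL_mul γ₁, mul_one] at h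
    simp only [mul_assoc, mul_inv_cancel_left] at h ⊢
    linarith
  · rintro φ ψ ⟨-, hφ, hφδ⟩ ⟨-, hψ, hψδ⟩
    have key := eq_zero_of_forall_mul_eq_add (h := fun γ => φ (1, γ) - ψ (1, γ)) fun a b => by
      have h1 := hφδ 1 a (a * b)
      have h2 := hψδ 1 a (a * b)
      have h3 := hφ a 1 b
      have h4 := hψ a 1 b
      rw [mul_one] at h3 h4
      linarith
    ext ⟨γ₁, γ₂⟩
    have h1 := hφ γ₁ 1 (γ₁⁻¹ * γ₂)
    have h2 := hψ γ₁ 1 (γ₁⁻¹ * γ₂)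
    rw [mul_one, mul_inv_cancel_left] at h1 h2
    rw [h1, h2]
    exact sub_eq_zero.mp (key _)
end

section
/- Let g ≥ 1, let t be an integer with 0 ≤ t ≤ 2g, let n ≥ 1, and let p be a prime with p > 2g + 1. Then there exists a prime ℓ not dividing n·p such that p does not divide the product over all s ∈ {0, 1, …, 2g} with s ≠ t of (ℓ^t − ℓ^s). -/
/-- Every prime `p` has a primitive root modulo `p`. -/
theorem ZMod.exists_unit_orderOf_eq_sub_one (p : ℕ) [Fact p.Prime] :
    ∃ u : (ZMod p)ˣ, orderOf u = p - 1 := by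
  obtain ⟨u, hu⟩ := IsCyclic.exists_ofOrder_eq_natCard (α := (ZMod p)ˣ)
  exact ⟨u, by rw [hu, Nat.card_eq_fintype_card, ZMod.card_units]⟩

/-- Some prime `ℓ > N` is a primitive root modulo the prime `p`. -/
theorem Nat.exists_prime_gt_orderOf_eq_sub_one (p N : ℕ) [Fact p.Prime] :
    ∃ ℓ : ℕ, N < ℓ ∧ ℓ.Prime ∧ orderOf (ℓ : ZMod p) = p - 1 := by
  obtain ⟨u, hu⟩ := ZMod.exists_unit_orderOf_eq_sub_one p
  obtain ⟨ℓ, hlt, hℓ, heq⟩ := Nat.forall_exists_prime_gt_and_eq_mod u.isUnit N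
  exact ⟨ℓ, hlt, hℓ, by rw [heq, orderOf_units, hu]⟩

open Finset in
/-- Let `g ≥ 1`, let `0 ≤ t ≤ 2g`, let `n ≥ 1`, and let `p` be a prime
with `p > 2g + 1`. Then there exists a prime `ℓ` not dividing `n·p` such that `p` does not
divide `∏_{0 ≤ s ≤ 2g, s ≠ t} (ℓ^t − ℓ^s)`. -/
theorem exists_prime_not_dividing_eigenvalue_product (g t n p : ℕ)
    (hg : 1 ≤ g) (ht : t ≤ 2 * g) (hn : 1 ≤ n) (hp : p.Prime) (hp2 : 2 * g + 1 < p) :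
    ∃ ℓ : ℕ, ℓ.Prime ∧ ¬ ℓ ∣ n * p ∧
      ¬ (p : ℤ) ∣ ∏ s ∈ (range (2 * g + 1)).erase t, ((ℓ : ℤ) ^ t - (ℓ : ℤ) ^ s) := by
  have : Fact p.Prime := ⟨hp⟩
  obtain ⟨ℓ, hlt, hℓ, hord⟩ := Nat.exists_prime_gt_orderOf_eq_sub_one p (n * p)
  refine ⟨ℓ, hℓ, Nat.not_dvd_of_pos_of_lt (Nat.mul_pos hn hp.pos) hlt, fun hdvd ↦ ?_⟩
  obtain ⟨s, hs, hps⟩ := (Nat.prime_iff_prime_int.mp hp).exists_mem_finset_dvd hdvd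
  obtain ⟨hst, hs⟩ := mem_erase.mp hs
  rw [mem_range] at hs
  have hpow : (ℓ : ZMod p) ^ t = (ℓ : ZMod p) ^ s := by
    rw [← ZMod.intCast_zmod_eq_zero_iff_dvd] at hps
    push_cast at hps
    exact sub_eq_zero.mp hps
  refine hst (pow_injOn_Iio_orderOf ?_ ?_ hpow).symm <;> rw [hord, Set.mem_Iio] <;> omega
end

section
/- Let W denote the representation of SL₂(ℤ) on ℤ² by matrix–vector multiplication (the standard representation). Then the first group homology H₁(SL₂(ℤ), W) is annihilated by 2, i.e. 2·x = 0 for every x ∈ H₁(SL₂(ℤ), W). -/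
/-- The standard representation `W = ℤ²` of `SL₂(ℤ)` by matrix–vector multiplication:
`γ • w = γ.mulVec w`, as a `ℤ`-linear endomorphism. -/
noncomputable def stdAct (γ : Matrix.SpecialLinearGroup (Fin 2) ℤ) :
    (Fin 2 → ℤ) →ₗ[ℤ] (Fin 2 → ℤ) :=
  ((γ : Matrix (Fin 2) (Fin 2) ℤ)).mulVecLin

/-- Degree-1 differential of the bar complex computing the group homology
`H₁(SL₂(ℤ), W)`: on a generator `[γ] ⊗ w` (encoded as `Finsupp.single γ w`) it is
`γ • w − w`. -/
noncomputable def barD1 :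
    (Matrix.SpecialLinearGroup (Fin 2) ℤ →₀ (Fin 2 → ℤ)) →ₗ[ℤ] (Fin 2 → ℤ) :=
  Finsupp.lsum ℕ fun γ => stdAct γ - LinearMap.id

/-- Degree-2 differential of the bar complex: on a generator `[γ₁|γ₂] ⊗ w` it is
`[γ₂] ⊗ w − [γ₁γ₂] ⊗ w + [γ₁] ⊗ (γ₂ • w)`. -/
noncomputable def barD2 :
    ((Matrix.SpecialLinearGroup (Fin 2) ℤ × Matrix.SpecialLinearGroup (Fin 2) ℤ)
        →₀ (Fin 2 → ℤ)) →ₗ[ℤ]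
      (Matrix.SpecialLinearGroup (Fin 2) ℤ →₀ (Fin 2 → ℤ)) :=
  Finsupp.lsum ℕ fun p =>
    Finsupp.lsingle p.2 - Finsupp.lsingle (p.1 * p.2)
      + (Finsupp.lsingle p.1).comp (stdAct p.2)

/-- The chain homotopy `[γ] ⊗ w ↦ [-1|γ] ⊗ w − [γ|-1] ⊗ w` attached to the central
element `-1` of `SL₂(ℤ)`. -/
noncomputable def negOneHomotopy :
    (Matrix.SpecialLinearGroup (Fin 2) ℤ →₀ (Fin 2 → ℤ)) →ₗ[ℤ]
      ((Matrix.SpecialLinearGroup (Fin 2) ℤ × Matrix.SpecialLinearGroup (Fin 2) ℤ)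
        →₀ (Fin 2 → ℤ)) :=
  Finsupp.lsum ℕ fun γ => Finsupp.lsingle (-1, γ) - Finsupp.lsingle (γ, -1)

theorem stdAct_neg_one (w : Fin 2 → ℤ) : stdAct (-1) w = -w := by
  simp [stdAct]

theorem barD1_single (γ : Matrix.SpecialLinearGroup (Fin 2) ℤ) (w : Fin 2 → ℤ) :
    barD1 (Finsupp.single γ w) = stdAct γ w - w := by
  simp [barD1]

theorem barD2_single (p : Matrix.SpecialLinearGroup (Fin 2) ℤ ×
    Matrix.SpecialLinearGroup (Fin 2) ℤ) (w : Fin 2 → ℤ) :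
    barD2 (Finsupp.single p w) = Finsupp.single p.2 w - Finsupp.single (p.1 * p.2) w
      + Finsupp.single p.1 (stdAct p.2 w) := by
  simp [barD2]

theorem negOneHomotopy_single (γ : Matrix.SpecialLinearGroup (Fin 2) ℤ) (w : Fin 2 → ℤ) :
    negOneHomotopy (Finsupp.single γ w) =
      Finsupp.single (-1, γ) w - Finsupp.single (γ, -1) w := by
  simp [negOneHomotopy]

/-- As `-1` is central and acts on `W` by `-1`, the homotopy connects multiplication by `2`
to a map factoring through `barD1`. -/
theorem barD2_negOneHomotopy (f : Matrix.SpecialLinearGroup (Fin 2) ℤ →₀ (Fin 2 → ℤ)) :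
    barD2 (negOneHomotopy f) = (2 : ℤ) • f + Finsupp.single (-1) (barD1 f) := by
  induction f using Finsupp.induction_linear with
  | zero => simp
  | add f g hf hg =>
    rw [map_add, map_add, hf, hg, map_add, Finsupp.single_add, smul_add]
    abel
  | single γ w =>
    rw [negOneHomotopy_single, map_sub, barD2_single, barD2_single, barD1_single,
      stdAct_neg_one, neg_one_mul, mul_neg_one, Finsupp.single_sub, Finsupp.single_neg]
    abel

/-- The first group homology `H₁(SL₂(ℤ), W)` of the standard
representation `W = ℤ²` is annihilated by `2`: every `1`-cycle of the bar complex becomes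
a boundary after multiplication by `2`, i.e. `2·x = 0` for every `x ∈ H₁ = ker d₁/im d₂`. -/
theorem h1_sl2_std_two_torsion :
    ∀ f : Matrix.SpecialLinearGroup (Fin 2) ℤ →₀ (Fin 2 → ℤ),
      barD1 f = 0 → ∃ h, barD2 h = (2 : ℤ) • f := by
  intro f hf
  exact ⟨negOneHomotopy f, by rw [barD2_negOneHomotopy, hf, Finsupp.single_zero, add_zero]⟩
end

section
/- Let n be a prime. Define φ_n : M₂(ℤ/nℤ) → ℤ by φ_n(M) = n⁴ − n³ − n² + n if M = 0; φ_n(M) = n − n² if M ≠ 0 and det M = 0; and φ_n(M) = n if det M ≠ 0. Then for every nonzero column vector v ∈ (ℤ/nℤ)² and every u ∈ (ℤ/nℤ)², the sum of φ_n(M) over all matrices M ∈ M₂(ℤ/nℤ) with M·v = u equals 0. -/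
/-- The multiplicity function `φ_n` of the cycle `e_n` on `M₂(ℤ/nℤ)`:
`φ_n(M) = n⁴ − n³ − n² + n` if `M = 0`; `φ_n(M) = n − n²` if `M ≠ 0` and `det M = 0`;
and `φ_n(M) = n` if `det M ≠ 0`. -/
def phiCycle (n : ℕ) (M : Matrix (Fin 2) (Fin 2) (ZMod n)) : ℤ :=
  if M = 0 then (n : ℤ) ^ 4 - (n : ℤ) ^ 3 - (n : ℤ) ^ 2 + n
  else if M.det = 0 then (n : ℤ) - (n : ℤ) ^ 2
  else (n : ℤ)

/-- The `2 × 2` matrix with columns `x` and `y`. -/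
def colMatrix {R : Type*} (x y : Fin 2 → R) : Matrix (Fin 2) (Fin 2) R :=
  !![x 0, y 0; x 1, y 1]

theorem det_colMatrix {R : Type*} [CommRing R] (x y : Fin 2 → R) :
    (colMatrix x y).det = x 0 * y 1 - y 0 * x 1 := by
  simp [colMatrix, Matrix.det_fin_two]

theorem mul_colMatrix {R : Type*} [CommRing R] (M : Matrix (Fin 2) (Fin 2) R)
    (x y : Fin 2 → R) :
    M * colMatrix x y = colMatrix (M.mulVec x) (M.mulVec y) := by
  ext i j
  fin_cases i <;> fin_cases j <;>
    simp [colMatrix, Matrix.mul_apply, Matrix.mulVec, dotProduct, Fin.sum_univ_two]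

theorem colMatrix_inj {R : Type*} {x y x' y' : Fin 2 → R} :
    colMatrix x y = colMatrix x' y' ↔ x = x' ∧ y = y' := by
  simp only [colMatrix, ← Matrix.ext_iff, funext_iff, Fin.forall_fin_two]
  simp
  tauto

theorem colMatrix_eq_zero_iff {R : Type*} [Zero R] {x y : Fin 2 → R} :
    colMatrix x y = 0 ↔ x = 0 ∧ y = 0 := by
  simp only [colMatrix, ← Matrix.ext_iff, funext_iff, Fin.forall_fin_two]
  simp
  tauto

theorem exists_det_colMatrix_ne_zero {K : Type*} [Field K] {v : Fin 2 → K} (hv : v ≠ 0) :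
    ∃ w, (colMatrix v w).det ≠ 0 := by
  by_cases h : v 0 = 0
  · refine ⟨![1, 0], fun h' => hv ?_⟩
    simp only [det_colMatrix] at h'
    ext i
    fin_cases i
    · exact h
    · simpa using h'
  · exact ⟨![0, 1], by simpa [det_colMatrix] using h⟩

/-- A nonzero vector of `K²` is parallel to exactly `|K|` vectors. -/
theorem card_det_colMatrix_eq_zero {K : Type*} [Field K] [Fintype K] [DecidableEq K]
    {u : Fin 2 → K} (hu : u ≠ 0) :
    (Finset.univ.filter fun w => (colMatrix u w).det = 0).card = Fintype.card K := by
  symm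
  refine Finset.card_bij (fun t _ => t • u) ?_ ?_ ?_
  · intro t _
    simp only [det_colMatrix, Finset.mem_filter, Finset.mem_univ, true_and, Pi.smul_apply,
      smul_eq_mul]
    ring
  · intro s _ t _ h
    exact smul_left_injective K hu h
  · intro w hw
    simp only [det_colMatrix, Finset.mem_filter, Finset.mem_univ, true_and] at hw
    by_cases h : u 0 = 0
    · have h1 : u 1 ≠ 0 := fun h1 => hu (by ext i; fin_cases i <;> assumption)
      have h0 : w 0 = 0 := by simpa [h, h1] using hw
      refine ⟨w 1 / u 1, Finset.mem_univ _, ?_⟩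
      ext i
      fin_cases i <;> simp [h, h0, h1]
    · refine ⟨w 0 / u 0, Finset.mem_univ _, ?_⟩
      ext i
      fin_cases i
      · simp [h]
      · simp only [Fin.mk_one, Pi.smul_apply, smul_eq_mul]
        field_simp
        linear_combination -hw

theorem phiCycle_eq (n : ℕ) (M : Matrix (Fin 2) (Fin 2) (ZMod n)) :
    phiCycle n M = n - (if M.det = 0 then (n : ℤ) ^ 2 else 0)
      + (if M = 0 then (n : ℤ) ^ 4 - (n : ℤ) ^ 3 else 0) := by
  unfold phiCycle
  by_cases h : M = 0
  · simp [h]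
    ring
  · by_cases h' : M.det = 0 <;> simp [h, h']

theorem phiCycle_mul_of_det_ne_zero (n : ℕ) [Fact n.Prime]
    (M P : Matrix (Fin 2) (Fin 2) (ZMod n)) (hP : P.det ≠ 0) :
    phiCycle n (M * P) = phiCycle n M := by
  have hz : M * P = 0 ↔ M = 0 := by
    refine ⟨fun h => ?_, fun h => by simp [h]⟩
    rw [← Matrix.mul_nonsing_inv_cancel_right P M hP.isUnit, h, zero_mul]
  simp [phiCycle, hz, Matrix.det_mul, hP]

theorem sum_phiCycle_colMatrix (n : ℕ) [Fact n.Prime] (u : Fin 2 → ZMod n) :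
    ∑ w, phiCycle n (colMatrix u w) = 0 := by
  simp only [phiCycle_eq, colMatrix_eq_zero_iff, Finset.sum_add_distrib, Finset.sum_sub_distrib,
    ← Finset.sum_filter, Finset.sum_const, nsmul_eq_mul]
  by_cases hu : u = 0
  · simp [hu, det_colMatrix, Finset.filter_eq', ZMod.card]
    ring
  · rw [card_det_colMatrix_eq_zero hu]
    simp [hu, ZMod.card]
    ring

/-- Let `n` be a prime. For every nonzero column vector
`v ∈ (ℤ/nℤ)²` and every `u ∈ (ℤ/nℤ)²`, the sum of `φ_n(M)` over all matrices
`M ∈ M₂(ℤ/nℤ)` with `M·v = u` equals `0`. -/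
theorem phiCycle_pushforward_zero (n : ℕ) [NeZero n] (hn : n.Prime)
    (v : Fin 2 → ZMod n) (hv : v ≠ 0) (u : Fin 2 → ZMod n) :
    ∑ M ∈ Finset.univ.filter
        (fun M : Matrix (Fin 2) (Fin 2) (ZMod n) => M.mulVec v = u),
      phiCycle n M = 0 := by
  have : Fact n.Prime := ⟨hn⟩
  obtain ⟨w, hw⟩ := exists_det_colMatrix_ne_zero hv
  rw [← sum_phiCycle_colMatrix n u]
  refine Finset.sum_bij' (fun M _ => M.mulVec w) (fun y _ => colMatrix u y * (colMatrix v w)⁻¹)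
    (fun _ _ => Finset.mem_univ _) ?_ ?_ ?_ ?_
  · intro y _
    have h := Matrix.nonsing_inv_mul_cancel_right (colMatrix v w) (colMatrix u y) hw.isUnit
    rw [mul_colMatrix, colMatrix_inj] at h
    simpa using h.1
  · intro M hM
    obtain rfl : M.mulVec v = u := by simpa using hM
    rw [← mul_colMatrix, Matrix.mul_nonsing_inv_cancel_right _ _ hw.isUnit]
  · intro y _
    have h := Matrix.nonsing_inv_mul_cancel_right (colMatrix v w) (colMatrix u y) hw.isUnit
    rw [mul_colMatrix, colMatrix_inj] at h
    exact h.2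
  · intro M hM
    obtain rfl : M.mulVec v = u := by simpa using hM
    rw [← mul_colMatrix, phiCycle_mul_of_det_ne_zero n M _ hw]
end
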